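/- Define U : ℝ^d → ℝ by U(x) = e^{3|x|} if |x| ≥ 1/3 and U(x) = 9e|x|² if |x| < 1/3. Suppose the drift assumption and the diffusion assumption hold, and fix α ∈ (0, 1/2). Then there exist constants C > 0, λ' > 0 and η̄ > 0 such that for every x ∈ ℝ^d and every η ∈ (0, η̄], if ξ is a random vector with Gaussian distribution N( x + η b(x)/(1 + η^α ‖∇b(x)‖_op), η σ(x)σ(x)^T ), then E[U(ξ)] ≤ e^{−λ' η} U(x) + C η. -/

import Mathlib

open MeasureTheory Real
open scoped RealInnerProductSpace

/-- The operator (spectral) norm of a real matrix, viewed as a linear map on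
Euclidean space. -/
noncomputable def matOpNorm {d : ℕ} (A : Matrix (Fin d) (Fin d) ℝ) : ℝ :=
  ‖LinearMap.toContinuousLinearMap (Matrix.toEuclideanLin A)‖

/-- The Gaussian measure on `ℝ^d` with mean `μ` and (positive definite) covariance
matrix `Γ`, defined through its density with respect to Lebesgue measure. -/
noncomputable def gaussianMeasure {d : ℕ} (μ : EuclideanSpace ℝ (Fin d))
    (Γ : Matrix (Fin d) (Fin d) ℝ) : Measure (EuclideanSpace ℝ (Fin d)) :=
  volume.withDensity fun x =>
    ENNReal.ofReal (Real.sqrt (((2 * π) ^ d * Γ.det))⁻¹ *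
      Real.exp (-⟪x - μ, Matrix.toEuclideanLin Γ⁻¹ (x - μ)⟫ / 2))

/-- The Lyapunov function `U(x) = e^{3|x|}` for `|x| ≥ 1/3` and `U(x) = 9e|x|²`
for `|x| < 1/3`. -/
noncomputable def Ufun {d : ℕ} (x : EuclideanSpace ℝ (Fin d)) : ℝ :=
  if 1 / 3 ≤ ‖x‖ then Real.exp (3 * ‖x‖) else 9 * Real.exp 1 * ‖x‖ ^ 2

/-!
For every `x` the function `U` lies below a tangent exponential of the squared norm,
`U z ≤ U x + β (exp (k (|z|² - |x|²)) - 1)`, with `k` bounded and, far from the origin,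
`β = U x` and `k = 3 / (2 |x|)`. A Gaussian vector of mean `m` and covariance `A Aᵀ` satisfies
`E exp (k |ξ|²) ≤ exp (k |m|² + ‖A‖² (2 k d + 4 k² |m|²))`, so only `|m|² - |x|²` matters. Inside
a ball it is `O(η)`, at the price of the additive term `C η`. Outside a large ball, dissipativity
forces the taming factor `‖∇b x‖` to be bounded below, hence `|b x| ≲ |x| ‖∇b x‖`; the taming then
keeps the quadratic error below the dissipation, `|m|² ≤ (1 - c η) |x|²`, and the gain
`k c η |x|² = (3/2) c η |x|` beats the `O(η)` contribution of the noise.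
-/

open Filter Topology Set

section Exponential

lemma exp_sub_one_le_mul_exp (x : ℝ) : rexp x - 1 ≤ x * rexp x := by
  have h := mul_le_mul_of_nonneg_right (Real.one_sub_le_exp_neg x) (Real.exp_pos x).le
  rw [← Real.exp_add, neg_add_cancel, Real.exp_zero] at h
  linarith

lemma exp_sub_one_le_mul_of_le_mul {a K η : ℝ} (hK : 0 ≤ K) (hη : 0 ≤ η) (hη1 : η ≤ 1)
    (ha : a ≤ K * η) : rexp a - 1 ≤ K * rexp K * η := by
  calc rexp a - 1 ≤ rexp (K * η) - 1 := by gcongr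
    _ ≤ K * η * rexp (K * η) := exp_sub_one_le_mul_exp _
    _ ≤ K * η * rexp K := by
        gcongr
        exact mul_le_of_le_one_right hK hη1
    _ = K * rexp K * η := by ring

lemma inv_one_sub_rpow_le_exp {t p : ℝ} (ht : 0 ≤ t) (ht' : t ≤ 1 / 2) (hp : 0 ≤ p) :
    (1 - t)⁻¹ ^ p ≤ rexp (2 * t * p) := by
  have hpos : 0 < 1 - t := by linarith
  have hinv : (1 - t)⁻¹ ≤ rexp (2 * t) := by
    rw [inv_le_iff_one_le_mul₀ hpos]
    nlinarith [Real.add_one_le_exp (2 * t)]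
  rw [Real.exp_mul]
  exact Real.rpow_le_rpow (by positivity) hinv hp

lemma eventually_rpow_mul_le {p δ : ℝ} (hp : 0 < p) (hδ : 0 < δ) (C : ℝ) :
    ∀ᶠ η : ℝ in 𝓝[>] 0, η ^ p * C ≤ δ := by
  have hlim : Tendsto (fun η : ℝ => η ^ p * C) (𝓝 0) (𝓝 0) := by
    simpa [hp.ne'] using (Real.continuousAt_rpow_const 0 p (Or.inr hp.le)).tendsto.mul_const C
  exact (hlim.mono_left nhdsWithin_le_nhds).eventually_le_const hδ

end Exponential

section GaussianIntegral

variable {V : Type*} [NormedAddCommGroup V] [InnerProductSpace ℝ V]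

lemma ofReal_exp_neg_mul_sq_norm_add_inner (b : ℝ) (w z : V) :
    ((rexp (-b * ‖z‖ ^ 2 + ⟪w, z⟫) : ℝ) : ℂ) =
      Complex.exp (-(b : ℂ) * ‖z‖ ^ 2 + (1 : ℂ) * (⟪w, z⟫ : ℝ)) := by
  push_cast
  rw [one_mul]

variable [FiniteDimensional ℝ V] [MeasurableSpace V] [BorelSpace V]

lemma integrable_exp_neg_mul_sq_norm_add_inner {b : ℝ} (hb : 0 < b) (w : V) :
    Integrable fun z : V => rexp (-b * ‖z‖ ^ 2 + ⟪w, z⟫) := by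
  have h := GaussianFourier.integrable_cexp_neg_mul_sq_norm_add
    (b := b) (by rwa [Complex.ofReal_re]) 1 w
  simp only [← ofReal_exp_neg_mul_sq_norm_add_inner] at h
  simpa only [RCLike.re_eq_complex_re, Complex.ofReal_re] using h.re

lemma integral_exp_neg_mul_sq_norm_add_inner {b : ℝ} (hb : 0 < b) (w : V) :
    ∫ z : V, rexp (-b * ‖z‖ ^ 2 + ⟪w, z⟫) =
      (π / b) ^ ((Module.finrank ℝ V : ℝ) / 2) * rexp (‖w‖ ^ 2 / (4 * b)) := by
  have h := GaussianFourier.integral_cexp_neg_mul_sq_norm_add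
    (b := b) (by rwa [Complex.ofReal_re]) 1 w
  simp only [← ofReal_exp_neg_mul_sq_norm_add_inner] at h
  rw [integral_complex_ofReal] at h
  rw [← Complex.ofReal_inj, h, Complex.ofReal_mul, Complex.ofReal_cpow (by positivity)]
  push_cast
  rw [one_pow, one_mul]

end GaussianIntegral

section GaussianMeasure

variable {d : ℕ}

/-- The Lebesgue density of `gaussianMeasure μ Γ`. -/
noncomputable def gaussianDensity (μ : EuclideanSpace ℝ (Fin d)) (Γ : Matrix (Fin d) (Fin d) ℝ)
    (x : EuclideanSpace ℝ (Fin d)) : ℝ :=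
  √((2 * π) ^ d * Γ.det)⁻¹ * rexp (-⟪x - μ, Matrix.toEuclideanLin Γ⁻¹ (x - μ)⟫ / 2)

lemma continuous_gaussianDensity (μ : EuclideanSpace ℝ (Fin d)) (Γ : Matrix (Fin d) (Fin d) ℝ) :
    Continuous (gaussianDensity μ Γ) := by
  have hlin : Continuous fun x => Matrix.toEuclideanLin Γ⁻¹ (x - μ) :=
    (LinearMap.continuous_of_finiteDimensional _).comp (by fun_prop)
  unfold gaussianDensity
  fun_prop

lemma gaussianMeasure_eq_withDensity (μ : EuclideanSpace ℝ (Fin d))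
    (Γ : Matrix (Fin d) (Fin d) ℝ) :
    gaussianMeasure μ Γ = volume.withDensity fun x => ENNReal.ofReal (gaussianDensity μ Γ x) :=
  rfl

lemma gaussianDensity_nonneg (μ : EuclideanSpace ℝ (Fin d)) (Γ : Matrix (Fin d) (Fin d) ℝ)
    (x : EuclideanSpace ℝ (Fin d)) : 0 ≤ gaussianDensity μ Γ x := by
  unfold gaussianDensity
  positivity

lemma integrable_gaussianMeasure_iff {μ : EuclideanSpace ℝ (Fin d)}
    {Γ : Matrix (Fin d) (Fin d) ℝ} {f : EuclideanSpace ℝ (Fin d) → ℝ} :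
    Integrable f (gaussianMeasure μ Γ) ↔ Integrable fun x => gaussianDensity μ Γ x * f x := by
  rw [gaussianMeasure_eq_withDensity, integrable_withDensity_iff_integrable_smul'
    (continuous_gaussianDensity μ Γ).measurable.ennreal_ofReal
    (.of_forall fun _ => ENNReal.ofReal_lt_top)]
  simp only [ENNReal.toReal_ofReal (gaussianDensity_nonneg μ Γ _), smul_eq_mul]

lemma integral_gaussianMeasure (μ : EuclideanSpace ℝ (Fin d)) (Γ : Matrix (Fin d) (Fin d) ℝ)
    (f : EuclideanSpace ℝ (Fin d) → ℝ) :
    ∫ x, f x ∂gaussianMeasure μ Γ = ∫ x, gaussianDensity μ Γ x * f x := by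
  rw [gaussianMeasure_eq_withDensity, integral_withDensity_eq_integral_toReal_smul
    (continuous_gaussianDensity μ Γ).measurable.ennreal_ofReal
    (.of_forall fun _ => ENNReal.ofReal_lt_top)]
  simp only [ENNReal.toReal_ofReal (gaussianDensity_nonneg μ Γ _), smul_eq_mul]

lemma gaussianDensity_zero_one (x : EuclideanSpace ℝ (Fin d)) :
    gaussianDensity 0 1 x = √((2 * π) ^ d)⁻¹ * rexp (-‖x‖ ^ 2 / 2) := by
  simp only [gaussianDensity, Matrix.det_one, mul_one, inv_one, sub_zero, Matrix.toLpLin_one,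
    LinearMap.id_apply, real_inner_self_eq_norm_sq]

lemma gaussianDensity_zero_one_mul_exp (k : ℝ) (w x : EuclideanSpace ℝ (Fin d)) :
    gaussianDensity 0 1 x * rexp (⟪w, x⟫ + k * ‖x‖ ^ 2) =
      √((2 * π) ^ d)⁻¹ * rexp (-(1 / 2 - k) * ‖x‖ ^ 2 + ⟪w, x⟫) := by
  rw [gaussianDensity_zero_one, mul_assoc, ← Real.exp_add]
  ring_nf

lemma integrable_exp_inner_add_mul_sq_norm_gaussianMeasure_zero_one {k : ℝ} (hk : k < 1 / 2)
    (w : EuclideanSpace ℝ (Fin d)) :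
    Integrable (fun z => rexp (⟪w, z⟫ + k * ‖z‖ ^ 2)) (gaussianMeasure 0 1) := by
  simp only [integrable_gaussianMeasure_iff, gaussianDensity_zero_one_mul_exp]
  exact (integrable_exp_neg_mul_sq_norm_add_inner (by linarith) w).const_mul _

lemma integral_exp_inner_add_mul_sq_norm_gaussianMeasure_zero_one {k : ℝ} (hk : k < 1 / 2)
    (w : EuclideanSpace ℝ (Fin d)) :
    ∫ z, rexp (⟪w, z⟫ + k * ‖z‖ ^ 2) ∂gaussianMeasure 0 1 =
      (1 - 2 * k)⁻¹ ^ ((d : ℝ) / 2) * rexp (‖w‖ ^ 2 / (2 * (1 - 2 * k))) := by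
  have hk' : 0 < 1 / 2 - k := by linarith
  have hnorm : √((2 * π) ^ d)⁻¹ = (2 * π)⁻¹ ^ ((d : ℝ) / 2) := by
    rw [Real.sqrt_eq_rpow, ← inv_pow, ← Real.rpow_natCast, ← Real.rpow_mul (by positivity),
      mul_one_div]
  simp only [integral_gaussianMeasure, gaussianDensity_zero_one_mul_exp]
  rw [integral_const_mul, integral_exp_neg_mul_sq_norm_add_inner hk', finrank_euclideanSpace_fin,
    hnorm, ← mul_assoc, ← Real.mul_rpow (by positivity) (by positivity)]
  congr 2
  · rw [show 1 - 2 * k = 2 * (1 / 2 - k) by ring]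
    field_simp
  · ring_nf

instance isProbabilityMeasure_gaussianMeasure_zero_one :
    IsProbabilityMeasure (gaussianMeasure (0 : EuclideanSpace ℝ (Fin d)) 1) := by
  have hint := integrable_exp_inner_add_mul_sq_norm_gaussianMeasure_zero_one (d := d) (k := 0)
    (by norm_num) 0
  have hval := integral_exp_inner_add_mul_sq_norm_gaussianMeasure_zero_one (d := d) (k := 0)
    (by norm_num) 0
  simp only [inner_zero_left, zero_mul, add_zero, Real.exp_zero, integrable_const_iff,
    one_ne_zero, false_or] at hint
  rw [isProbabilityMeasure_iff_real]
  simpa using hval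

lemma bijective_toEuclideanLin {A : Matrix (Fin d) (Fin d) ℝ} (hA : IsUnit A) :
    Function.Bijective (Matrix.toEuclideanLin A) := by
  rw [← Module.End.isUnit_iff, LinearMap.isUnit_iff_isUnit_det, LinearMap.det_toLpLin]
  exact (Matrix.isUnit_iff_isUnit_det A).1 hA

lemma inner_toEuclideanLin_inv_mul_transpose {A : Matrix (Fin d) (Fin d) ℝ} (hA : IsUnit A)
    (z : EuclideanSpace ℝ (Fin d)) :
    ⟪Matrix.toEuclideanLin A z,
      Matrix.toEuclideanLin (A * A.transpose)⁻¹ (Matrix.toEuclideanLin A z)⟫ = ‖z‖ ^ 2 := by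
  have hdet : IsUnit A.det := (Matrix.isUnit_iff_isUnit_det A).1 hA
  have hadj : LinearMap.adjoint (Matrix.toEuclideanLin A) = Matrix.toEuclideanLin A.transpose := by
    rw [← Matrix.toEuclideanLin_conjTranspose_eq_adjoint,
      Matrix.conjTranspose_eq_transpose_of_trivial]
  have hcancel : A.transpose * ((A * A.transpose)⁻¹ * A) = 1 := by
    rw [Matrix.mul_inv_rev, Matrix.mul_assoc, Matrix.nonsing_inv_mul _ hdet, Matrix.mul_one,
      Matrix.mul_nonsing_inv _ (by rwa [Matrix.det_transpose])]
  rw [← LinearMap.adjoint_inner_right, hadj, ← LinearMap.comp_apply, ← LinearMap.comp_apply,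
    ← Matrix.toLpLin_mul_same, ← Matrix.toLpLin_mul_same, Matrix.mul_assoc, hcancel,
    Matrix.toLpLin_one, LinearMap.id_apply, real_inner_self_eq_norm_sq]

lemma abs_det_mul_gaussianDensity_mul_transpose (μ : EuclideanSpace ℝ (Fin d))
    {A : Matrix (Fin d) (Fin d) ℝ} (hA : IsUnit A) (z : EuclideanSpace ℝ (Fin d)) :
    |A.det| * gaussianDensity μ (A * A.transpose) (μ + Matrix.toEuclideanLin A z) =
      gaussianDensity 0 1 z := by
  have hdet : A.det ≠ 0 := ((Matrix.isUnit_iff_isUnit_det A).1 hA).ne_zero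
  have hnorm : |A.det| * √((2 * π) ^ d * (A * A.transpose).det)⁻¹ = √((2 * π) ^ d)⁻¹ := by
    rw [← Real.sqrt_sq_eq_abs, ← Real.sqrt_mul (sq_nonneg _), Matrix.det_mul, Matrix.det_transpose]
    congr 1
    field_simp
  rw [gaussianDensity, gaussianDensity_zero_one, add_sub_cancel_left,
    inner_toEuclideanLin_inv_mul_transpose hA, ← mul_assoc, hnorm]

lemma gaussianMeasure_mul_transpose_eq_map (μ : EuclideanSpace ℝ (Fin d))
    {A : Matrix (Fin d) (Fin d) ℝ} (hA : IsUnit A) :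
    gaussianMeasure μ (A * A.transpose) =
      (gaussianMeasure 0 1).map fun z => μ + Matrix.toEuclideanLin A z := by
  set T := LinearMap.toContinuousLinearMap (Matrix.toEuclideanLin A)
  set f : EuclideanSpace ℝ (Fin d) → EuclideanSpace ℝ (Fin d) := fun z => μ + T z
  have hf : Measurable f := by fun_prop
  have hT : Function.Bijective T := bijective_toEuclideanLin hA
  have hinj : Function.Injective f := (add_right_injective μ).comp hT.1
  have hsurj : Function.Surjective f := (add_left_surjective μ).comp hT.2
  have hdet : T.det = A.det := LinearMap.det_toLpLin _ _
  ext s hs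
  change _ = (gaussianMeasure 0 1).map f s
  rw [Measure.map_apply hf hs, gaussianMeasure_eq_withDensity, gaussianMeasure_eq_withDensity,
    withDensity_apply _ hs, withDensity_apply _ (hf hs)]
  conv_lhs => rw [← image_preimage_eq s hsurj]
  rw [lintegral_image_eq_lintegral_abs_det_fderiv_mul volume (hf hs)
    (fun z _ => (T.hasFDerivAt.const_add μ).hasFDerivWithinAt) hinj.injOn]
  refine lintegral_congr fun z => ?_
  rw [hdet, ← ENNReal.ofReal_mul (abs_nonneg _)]
  exact congrArg ENNReal.ofReal (abs_det_mul_gaussianDensity_mul_transpose μ hA z)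

lemma isProbabilityMeasure_gaussianMeasure_mul_transpose (μ : EuclideanSpace ℝ (Fin d))
    {A : Matrix (Fin d) (Fin d) ℝ} (hA : IsUnit A) :
    IsProbabilityMeasure (gaussianMeasure μ (A * A.transpose)) := by
  have hcont : Continuous (Matrix.toEuclideanLin A) := LinearMap.continuous_of_finiteDimensional _
  rw [gaussianMeasure_mul_transpose_eq_map μ hA]
  exact Measure.isProbabilityMeasure_map (by fun_prop)

end GaussianMeasure

section GaussianMoment

lemma mul_norm_add_sq_le {E F : Type*} [NormedAddCommGroup E] [InnerProductSpace ℝ E]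
    [CompleteSpace E] [NormedAddCommGroup F] [InnerProductSpace ℝ F] [CompleteSpace F] {k : ℝ}
    (hk : 0 ≤ k) (T : E →L[ℝ] F) (m : F) (z : E) :
    k * ‖m + T z‖ ^ 2 ≤
      k * ‖m‖ ^ 2 + (⟪(2 * k) • T.adjoint m, z⟫ + k * ‖T‖ ^ 2 * ‖z‖ ^ 2) := by
  have hT : ‖T z‖ ^ 2 ≤ ‖T‖ ^ 2 * ‖z‖ ^ 2 := by
    rw [← mul_pow]
    gcongr
    exact T.le_opNorm z
  rw [norm_add_sq_real, real_inner_smul_left, ContinuousLinearMap.adjoint_inner_left]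
  linarith [mul_le_mul_of_nonneg_left hT hk]

variable {d : ℕ}

lemma integrable_exp_mul_sq_norm_gaussianMeasure {A : Matrix (Fin d) (Fin d) ℝ} (hA : IsUnit A)
    {k : ℝ} (hk : 0 ≤ k) (hkA : 4 * k * matOpNorm A ^ 2 ≤ 1) (m : EuclideanSpace ℝ (Fin d)) :
    Integrable (fun z => rexp (k * ‖z‖ ^ 2)) (gaussianMeasure m (A * A.transpose)) := by
  set T := LinearMap.toContinuousLinearMap (Matrix.toEuclideanLin A)
  have hT : Measurable fun z => m + T z := by fun_prop
  have hdom := integrable_exp_inner_add_mul_sq_norm_gaussianMeasure_zero_one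
    (k := k * ‖T‖ ^ 2) (by change 4 * k * ‖T‖ ^ 2 ≤ 1 at hkA; linarith) ((2 * k) • T.adjoint m)
  rw [gaussianMeasure_mul_transpose_eq_map m hA]
  refine (integrable_map_measure (by fun_prop) hT.aemeasurable).2 ?_
  refine (hdom.const_mul (rexp (k * ‖m‖ ^ 2))).mono' (by fun_prop) (.of_forall fun z => ?_)
  rw [Function.comp_apply, Real.norm_of_nonneg (Real.exp_pos _).le, ← Real.exp_add]
  exact Real.exp_le_exp.2 (mul_norm_add_sq_le hk T m z)

lemma integral_exp_mul_sq_norm_gaussianMeasure_le {A : Matrix (Fin d) (Fin d) ℝ} (hA : IsUnit A)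
    {k : ℝ} (hk : 0 ≤ k) (hkA : 4 * k * matOpNorm A ^ 2 ≤ 1) (m : EuclideanSpace ℝ (Fin d)) :
    ∫ z, rexp (k * ‖z‖ ^ 2) ∂gaussianMeasure m (A * A.transpose) ≤
      rexp (k * ‖m‖ ^ 2 + matOpNorm A ^ 2 * (2 * k * d + 4 * k ^ 2 * ‖m‖ ^ 2)) := by
  set T := LinearMap.toContinuousLinearMap (Matrix.toEuclideanLin A)
  obtain ⟨t, ht⟩ : ∃ t, t = k * ‖T‖ ^ 2 := ⟨_, rfl⟩
  have ht0 : 0 ≤ t := by rw [ht]; positivity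
  have ht1 : 4 * t ≤ 1 := by rw [ht, ← mul_assoc]; exact hkA
  have hT : Measurable fun z => m + T z := by fun_prop
  set w := (2 * k) • T.adjoint m
  have hw : ‖w‖ ^ 2 ≤ 4 * k ^ 2 * (‖T‖ ^ 2 * ‖m‖ ^ 2) := by
    have hadj : ‖T.adjoint m‖ ≤ ‖T‖ * ‖m‖ := by
      simpa only [LinearIsometryEquiv.norm_map] using T.adjoint.le_opNorm m
    calc ‖w‖ ^ 2 = 4 * k ^ 2 * ‖T.adjoint m‖ ^ 2 := by
          rw [norm_smul, Real.norm_of_nonneg (by positivity)]; ring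
      _ ≤ 4 * k ^ 2 * (‖T‖ * ‖m‖) ^ 2 := by gcongr
      _ = 4 * k ^ 2 * (‖T‖ ^ 2 * ‖m‖ ^ 2) := by ring
  have hdet : (1 - 2 * t)⁻¹ ^ ((d : ℝ) / 2) ≤ rexp (2 * t * d) :=
    (inv_one_sub_rpow_le_exp (by positivity) (by linarith) (by positivity)).trans_eq (by ring_nf)
  have hlin : rexp (‖w‖ ^ 2 / (2 * (1 - 2 * t))) ≤ rexp (4 * k ^ 2 * (‖T‖ ^ 2 * ‖m‖ ^ 2)) :=
    Real.exp_le_exp.2 ((div_le_self (sq_nonneg _) (by linarith)).trans hw)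
  calc ∫ z, rexp (k * ‖z‖ ^ 2) ∂gaussianMeasure m (A * A.transpose)
      = ∫ z, rexp (k * ‖m + T z‖ ^ 2) ∂gaussianMeasure 0 1 := by
        rw [gaussianMeasure_mul_transpose_eq_map m hA]
        exact integral_map hT.aemeasurable (by fun_prop)
    _ ≤ ∫ z, rexp (k * ‖m‖ ^ 2) * rexp (⟪w, z⟫ + t * ‖z‖ ^ 2) ∂gaussianMeasure 0 1 := by
        refine integral_mono_of_nonneg (.of_forall fun z => (Real.exp_pos _).le)
          ((integrable_exp_inner_add_mul_sq_norm_gaussianMeasure_zero_one (by linarith)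
            w).const_mul _) (.of_forall fun z => ?_)
        simp only [← Real.exp_add, ht]
        exact Real.exp_le_exp.2 (mul_norm_add_sq_le hk T m z)
    _ = rexp (k * ‖m‖ ^ 2) *
          ((1 - 2 * t)⁻¹ ^ ((d : ℝ) / 2) * rexp (‖w‖ ^ 2 / (2 * (1 - 2 * t)))) := by
        rw [integral_const_mul, integral_exp_inner_add_mul_sq_norm_gaussianMeasure_zero_one
          (by linarith)]
    _ ≤ rexp (k * ‖m‖ ^ 2) * (rexp (2 * t * d) * rexp (4 * k ^ 2 * (‖T‖ ^ 2 * ‖m‖ ^ 2))) := by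
        gcongr
    _ = rexp (k * ‖m‖ ^ 2 + ‖T‖ ^ 2 * (2 * k * d + 4 * k ^ 2 * ‖m‖ ^ 2)) := by
        rw [← Real.exp_add, ← Real.exp_add, ht]
        ring_nf

lemma integral_gaussianMeasure_le_of_le_add_mul_exp {A : Matrix (Fin d) (Fin d) ℝ}
    (hA : IsUnit A) {k β a ρ : ℝ} (hk : 0 ≤ k) (hkA : 4 * k * matOpNorm A ^ 2 ≤ 1) (hβ : 0 ≤ β)
    (m : EuclideanSpace ℝ (Fin d)) {f : EuclideanSpace ℝ (Fin d) → ℝ} (hf : ∀ z, 0 ≤ f z)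
    (hle : ∀ z, f z ≤ a + β * rexp (k * (‖z‖ ^ 2 - ρ))) :
    ∫ z, f z ∂gaussianMeasure m (A * A.transpose) ≤
      a + β * rexp (k * (‖m‖ ^ 2 - ρ) +
        matOpNorm A ^ 2 * (2 * k * d + 4 * k ^ 2 * ‖m‖ ^ 2)) := by
  have := isProbabilityMeasure_gaussianMeasure_mul_transpose m hA
  have hint := (integrable_exp_mul_sq_norm_gaussianMeasure hA hk hkA m).const_mul
    (β * rexp (-(k * ρ)))
  have hle' : ∀ z, f z ≤ a + β * rexp (-(k * ρ)) * rexp (k * ‖z‖ ^ 2) := fun z =>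
    (hle z).trans_eq (by rw [mul_assoc, ← Real.exp_add]; ring_nf)
  calc ∫ z, f z ∂gaussianMeasure m (A * A.transpose)
      ≤ ∫ z, (a + β * rexp (-(k * ρ)) * rexp (k * ‖z‖ ^ 2))
          ∂gaussianMeasure m (A * A.transpose) :=
        integral_mono_of_nonneg (.of_forall hf) ((integrable_const a).add hint) (.of_forall hle')
    _ = a + β * rexp (-(k * ρ)) *
          ∫ z, rexp (k * ‖z‖ ^ 2) ∂gaussianMeasure m (A * A.transpose) := by
        rw [integral_add (integrable_const a) hint, integral_const_mul, integral_const,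
          probReal_univ, one_smul]
    _ ≤ a + β * rexp (-(k * ρ)) *
          rexp (k * ‖m‖ ^ 2 + matOpNorm A ^ 2 * (2 * k * d + 4 * k ^ 2 * ‖m‖ ^ 2)) := by
        gcongr
        exact integral_exp_mul_sq_norm_gaussianMeasure_le hA hk hkA m
    _ = _ := by
        rw [mul_assoc, ← Real.exp_add]
        ring_nf

end GaussianMoment

section Lyapunov

variable {d : ℕ}

lemma Ufun_of_third_le {x : EuclideanSpace ℝ (Fin d)} (hx : 1 / 3 ≤ ‖x‖) :
    Ufun x = rexp (3 * ‖x‖) :=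
  if_pos hx

lemma Ufun_of_le_third {x : EuclideanSpace ℝ (Fin d)} (hx : ‖x‖ ≤ 1 / 3) :
    Ufun x = 9 * rexp 1 * ‖x‖ ^ 2 := by
  rcases hx.lt_or_eq with hlt | heq
  · exact if_neg hlt.not_ge
  · rw [Ufun_of_third_le heq.ge, heq]
    norm_num
    ring

lemma Ufun_nonneg (x : EuclideanSpace ℝ (Fin d)) : 0 ≤ Ufun x := by
  unfold Ufun
  positivity

lemma Ufun_le_exp (x : EuclideanSpace ℝ (Fin d)) : Ufun x ≤ rexp (3 * ‖x‖) := by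
  rcases le_total (1 / 3) ‖x‖ with hx | hx
  · exact (Ufun_of_third_le hx).le
  · have hsq : (3 * ‖x‖) ^ 2 ≤ rexp (3 * ‖x‖ - 1) := by
      nlinarith [Real.add_one_le_exp (3 * ‖x‖ - 1), norm_nonneg x]
    calc Ufun x = rexp 1 * (3 * ‖x‖) ^ 2 := by rw [Ufun_of_le_third hx]; ring
      _ ≤ rexp 1 * rexp (3 * ‖x‖ - 1) := by gcongr
      _ = rexp (3 * ‖x‖) := by rw [← Real.exp_add, add_sub_cancel]

lemma Ufun_le_sq {x : EuclideanSpace ℝ (Fin d)} (hx : ‖x‖ ≤ 1) :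
    Ufun x ≤ 9 * rexp 1 * ‖x‖ ^ 2 := by
  rcases le_total (1 / 3) ‖x‖ with hx' | hx'
  · obtain ⟨u, hu⟩ : ∃ u, u = (3 * ‖x‖ - 1) / 2 := ⟨_, rfl⟩
    have hu0 : 0 ≤ u := by linarith
    have hu1 : u ≤ 1 := by linarith
    have hexp : rexp u ≤ 1 + 2 * u := by
      have := (abs_le.1 (Real.abs_exp_sub_one_sub_id_le (x := u) (by rwa [abs_of_nonneg hu0]))).2
      nlinarith
    calc Ufun x = rexp 1 * rexp u ^ 2 := by
          rw [Ufun_of_third_le hx', ← Real.exp_nat_mul, ← Real.exp_add, hu]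
          push_cast
          ring_nf
      _ ≤ rexp 1 * (1 + 2 * u) ^ 2 := by gcongr
      _ = 9 * rexp 1 * ‖x‖ ^ 2 := by rw [hu]; ring
  · exact (Ufun_of_le_third hx').le

lemma Ufun_le_mul_exp_of_third_le {x : EuclideanSpace ℝ (Fin d)} (hx : 1 / 3 ≤ ‖x‖)
    (z : EuclideanSpace ℝ (Fin d)) :
    Ufun z ≤ Ufun x * rexp (3 / (2 * ‖x‖) * (‖z‖ ^ 2 - ‖x‖ ^ 2)) := by
  have : 0 < ‖x‖ := by linarith
  have htangent : 3 * ‖z‖ ≤ 3 * ‖x‖ + 3 / (2 * ‖x‖) * (‖z‖ ^ 2 - ‖x‖ ^ 2) := by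
    have hsq : 3 * ‖x‖ + 3 / (2 * ‖x‖) * (‖z‖ ^ 2 - ‖x‖ ^ 2) - 3 * ‖z‖ =
        3 / (2 * ‖x‖) * (‖z‖ - ‖x‖) ^ 2 := by
      field_simp
      ring
    have : 0 ≤ 3 / (2 * ‖x‖) * (‖z‖ - ‖x‖) ^ 2 := by positivity
    linarith
  rw [Ufun_of_third_le hx, ← Real.exp_add]
  exact (Ufun_le_exp z).trans (Real.exp_le_exp.2 htangent)

lemma Ufun_le_add_exp_sub_one_of_le_third {x : EuclideanSpace ℝ (Fin d)} (hx : ‖x‖ ≤ 1 / 3)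
    (z : EuclideanSpace ℝ (Fin d)) :
    Ufun z ≤ Ufun x + 3 * rexp 1 * (rexp (3 * (‖z‖ ^ 2 - ‖x‖ ^ 2)) - 1) := by
  rw [Ufun_of_le_third hx]
  rcases le_total ‖z‖ 1 with hz | hz
  · have htangent := mul_le_mul_of_nonneg_left (Real.add_one_le_exp (3 * (‖z‖ ^ 2 - ‖x‖ ^ 2)))
      (show 0 ≤ 3 * rexp 1 by positivity)
    linarith [Ufun_le_sq hz]
  · have hx2 : ‖x‖ ^ 2 ≤ 1 / 9 := by nlinarith [norm_nonneg x]
    have he : 2 ≤ rexp 1 := by linarith [Real.add_one_le_exp (1 : ℝ)]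
    have hz4 : 4 ≤ rexp (3 * ‖z‖) := by linarith [Real.add_one_le_exp (3 * ‖z‖)]
    have hexp : 2 / 3 * rexp (3 * ‖z‖) ≤ rexp (3 * (‖z‖ ^ 2 - ‖x‖ ^ 2)) := by
      calc 2 / 3 * rexp (3 * ‖z‖) ≤ rexp (-1 / 3) * rexp (3 * ‖z‖) := by
            gcongr
            linarith [Real.add_one_le_exp (-1 / 3 : ℝ)]
        _ = rexp (-1 / 3 + 3 * ‖z‖) := (Real.exp_add _ _).symm
        _ ≤ rexp (3 * (‖z‖ ^ 2 - ‖x‖ ^ 2)) := Real.exp_le_exp.2 (by nlinarith)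
    calc Ufun z ≤ rexp (3 * ‖z‖) := Ufun_le_exp z
      _ ≤ 6 * (2 / 3 * rexp (3 * ‖z‖) - 1) := by linarith
      _ ≤ 3 * rexp 1 * (rexp (3 * (‖z‖ ^ 2 - ‖x‖ ^ 2)) - 1) := by
          gcongr <;> linarith
      _ ≤ _ := le_add_of_nonneg_left (by positivity)

lemma exists_Ufun_le_add_mul_exp_sub_one (x : EuclideanSpace ℝ (Fin d)) :
    ∃ β k : ℝ, 0 ≤ β ∧ β ≤ 3 * rexp (1 + 3 * ‖x‖) ∧ 0 ≤ k ∧ k ≤ 9 / 2 ∧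
      ∀ z : EuclideanSpace ℝ (Fin d),
        Ufun z ≤ Ufun x + β * (rexp (k * (‖z‖ ^ 2 - ‖x‖ ^ 2)) - 1) := by
  rcases le_total (1 / 3) ‖x‖ with hx | hx
  · refine ⟨Ufun x, 3 / (2 * ‖x‖), Ufun_nonneg x, ?_, by positivity, ?_, fun z => ?_⟩
    · have : rexp (3 * ‖x‖) ≤ rexp (1 + 3 * ‖x‖) := Real.exp_le_exp.2 (by linarith)
      linarith [Ufun_le_exp x, Real.exp_pos (1 + 3 * ‖x‖)]
    · rw [div_le_iff₀ (by linarith)]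
      linarith
    · linarith [Ufun_le_mul_exp_of_third_le hx z]
  · refine ⟨3 * rexp 1, 3, by positivity, ?_, by norm_num, by norm_num,
      Ufun_le_add_exp_sub_one_of_le_third hx⟩
    gcongr
    linarith [norm_nonneg x]

lemma integral_Ufun_le_mul_exp_of_one_le {A : Matrix (Fin d) (Fin d) ℝ} (hA : IsUnit A)
    (hA1 : 6 * matOpNorm A ^ 2 ≤ 1) {x m : EuclideanSpace ℝ (Fin d)} (hx : 1 ≤ ‖x‖)
    (hmx : ‖m‖ ^ 2 ≤ ‖x‖ ^ 2) :
    ∫ z, Ufun z ∂gaussianMeasure m (A * A.transpose) ≤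
      Ufun x * rexp (3 / (2 * ‖x‖) * (‖m‖ ^ 2 - ‖x‖ ^ 2) + matOpNorm A ^ 2 * (3 * d + 9)) := by
  have hle : ∀ z : EuclideanSpace ℝ (Fin d),
      Ufun z ≤ 0 + Ufun x * rexp (3 / (2 * ‖x‖) * (‖z‖ ^ 2 - ‖x‖ ^ 2)) := fun z => by
    rw [zero_add]
    exact Ufun_le_mul_exp_of_third_le (by linarith) z
  obtain ⟨k, hk⟩ : ∃ k, k = 3 / (2 * ‖x‖) := ⟨_, rfl⟩
  rw [← hk] at hle ⊢
  have hk0 : 0 ≤ k := by rw [hk]; positivity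
  have hkx : k * ‖x‖ = 3 / 2 := by rw [hk]; field_simp
  have hk1 : k ≤ 3 / 2 := by nlinarith
  have hkA : 4 * k * matOpNorm A ^ 2 ≤ 1 := by nlinarith [sq_nonneg (matOpNorm A)]
  have hkm : 4 * k ^ 2 * ‖m‖ ^ 2 ≤ 9 := by
    calc 4 * k ^ 2 * ‖m‖ ^ 2 ≤ 4 * k ^ 2 * ‖x‖ ^ 2 := by gcongr
      _ = 4 * (k * ‖x‖) ^ 2 := by ring
      _ = 9 := by rw [hkx]; norm_num
  have hkd : 2 * k * d ≤ 3 * d := by gcongr; linarith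
  refine (integral_gaussianMeasure_le_of_le_add_mul_exp hA hk0 hkA (Ufun_nonneg x) m
    Ufun_nonneg hle).trans ?_
  rw [zero_add]
  gcongr
  exact Ufun_nonneg x

lemma exists_integral_Ufun_le_exp_neg_mul {c : ℝ} (hc : 0 < c) (S : ℝ) :
    ∃ R, ∀ᶠ η : ℝ in 𝓝[>] 0, ∀ (x m : EuclideanSpace ℝ (Fin d)) (A : Matrix (Fin d) (Fin d) ℝ),
      IsUnit A → matOpNorm A ^ 2 ≤ η * S → R ≤ ‖x‖ → ‖m‖ ^ 2 ≤ ‖x‖ ^ 2 - c * η * ‖x‖ ^ 2 →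
        ∫ z, Ufun z ∂gaussianMeasure m (A * A.transpose) ≤ rexp (-η) * Ufun x := by
  refine ⟨max 1 ((1 + S * (3 * d + 9)) / (3 / 2 * c)), ?_⟩
  filter_upwards [self_mem_nhdsWithin, eventually_rpow_mul_le one_pos one_pos (6 * S)]
    with η (hη : 0 < η) hηS x m A hA hAS hRx hm
  rw [Real.rpow_one] at hηS
  have hx1 : 1 ≤ ‖x‖ := (le_max_left _ _).trans hRx
  have hxR : 1 + S * (3 * d + 9) ≤ 3 / 2 * c * ‖x‖ := by
    rw [mul_comm _ ‖x‖, ← div_le_iff₀ (by positivity)]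
    exact (le_max_right _ _).trans hRx
  have hdrift : 3 / (2 * ‖x‖) * (‖m‖ ^ 2 - ‖x‖ ^ 2) ≤ -(η * (3 / 2 * c * ‖x‖)) := by
    calc _ ≤ 3 / (2 * ‖x‖) * -(c * η * ‖x‖ ^ 2) := by gcongr; linarith
      _ = -(η * (3 / 2 * c * ‖x‖)) := by field_simp
  have hnoise : matOpNorm A ^ 2 * (3 * d + 9) ≤ η * S * (3 * d + 9) := by gcongr
  refine (integral_Ufun_le_mul_exp_of_one_le hA (by linarith) hx1
    (hm.trans (sub_le_self _ (by positivity)))).trans ?_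
  rw [mul_comm]
  gcongr
  · exact Ufun_nonneg x
  · linarith [mul_le_mul_of_nonneg_left hxR hη.le]

lemma exists_integral_Ufun_le_add_mul {R B : ℝ} (hR : 0 ≤ R) (hB : 0 ≤ B) (S : ℝ) :
    ∃ C, ∀ᶠ η : ℝ in 𝓝[>] 0, ∀ (x m : EuclideanSpace ℝ (Fin d)) (A : Matrix (Fin d) (Fin d) ℝ),
      IsUnit A → matOpNorm A ^ 2 ≤ η * S → ‖x‖ ≤ R → ‖m - x‖ ≤ η * B →
        ∫ z, Ufun z ∂gaussianMeasure m (A * A.transpose) ≤ Ufun x + C * η := by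
  obtain ⟨K, hK⟩ : ∃ K, K = 9 / 2 * (2 * R * B + B ^ 2) + S * (9 * d + 81 * (R + B) ^ 2) :=
    ⟨_, rfl⟩
  refine ⟨3 * rexp (1 + 3 * R) * (K * rexp K), ?_⟩
  filter_upwards [Ioc_mem_nhdsGT one_pos, eventually_rpow_mul_le one_pos one_pos (18 * S)]
    with η ⟨hη, hη1⟩ hηS x m A hA hAS hxR hmx
  rw [Real.rpow_one] at hηS
  have hS : 0 ≤ S := nonneg_of_mul_nonneg_right ((sq_nonneg _).trans hAS) hη
  obtain ⟨β, k, hβ0, hβ, hk0, hk, hle⟩ := exists_Ufun_le_add_mul_exp_sub_one x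
  have hmη : ‖m‖ ≤ ‖x‖ + η * B := by linarith [norm_sub_norm_le m x]
  have hmRB : ‖m‖ ≤ R + B := hmη.trans (add_le_add hxR (mul_le_of_le_one_left hB hη1))
  have hdrift : k * (‖m‖ ^ 2 - ‖x‖ ^ 2) ≤ 9 / 2 * (2 * R * B + B ^ 2) * η := by
    calc k * (‖m‖ ^ 2 - ‖x‖ ^ 2) ≤ k * ((‖x‖ + η * B) ^ 2 - ‖x‖ ^ 2) := by gcongr
      _ = k * (2 * ‖x‖ * B + η * B ^ 2) * η := by ring
      _ ≤ 9 / 2 * (2 * R * B + 1 * B ^ 2) * η := by gcongr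
      _ = 9 / 2 * (2 * R * B + B ^ 2) * η := by rw [one_mul]
  have hnoise : matOpNorm A ^ 2 * (2 * k * d + 4 * k ^ 2 * ‖m‖ ^ 2) ≤
      S * (9 * d + 81 * (R + B) ^ 2) * η := by
    calc matOpNorm A ^ 2 * (2 * k * d + 4 * k ^ 2 * ‖m‖ ^ 2)
        ≤ η * S * (2 * (9 / 2) * d + 4 * (9 / 2) ^ 2 * (R + B) ^ 2) := by gcongr
      _ = S * (9 * d + 81 * (R + B) ^ 2) * η := by ring
  have hkA : 4 * k * matOpNorm A ^ 2 ≤ 1 := by nlinarith [sq_nonneg (matOpNorm A)]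
  have hexp := exp_sub_one_le_mul_of_le_mul (K := K) (by rw [hK]; positivity) hη.le hη1
    ((add_le_add hdrift hnoise).trans_eq (by rw [hK]; ring))
  have hβR : β ≤ 3 * rexp (1 + 3 * R) := hβ.trans (by gcongr)
  calc ∫ z, Ufun z ∂gaussianMeasure m (A * A.transpose)
      ≤ Ufun x - β + β * rexp (k * (‖m‖ ^ 2 - ‖x‖ ^ 2) +
          matOpNorm A ^ 2 * (2 * k * d + 4 * k ^ 2 * ‖m‖ ^ 2)) :=
        integral_gaussianMeasure_le_of_le_add_mul_exp hA hk0 hkA hβ0 m Ufun_nonneg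
          fun z => (hle z).trans_eq (by ring)
    _ ≤ Ufun x + β * (K * rexp K * η) := by linarith [mul_le_mul_of_nonneg_left hexp hβ0]
    _ ≤ Ufun x + 3 * rexp (1 + 3 * R) * (K * rexp K * η) := by
        gcongr
        rw [hK]
        positivity
    _ = Ufun x + 3 * rexp (1 + 3 * R) * (K * rexp K) * η := by ring

lemma Ufun_le_exp_neg_mul_add {x : EuclideanSpace ℝ (Fin d)} {R η : ℝ} (hη : 0 ≤ η)
    (hx : ‖x‖ ≤ R) : Ufun x ≤ rexp (-η) * Ufun x + rexp (3 * R) * η := by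
  have hU : Ufun x ≤ rexp (3 * R) := (Ufun_le_exp x).trans (by gcongr)
  have hexp := mul_le_mul_of_nonneg_right (Real.one_sub_le_exp_neg η) (Ufun_nonneg x)
  linarith [mul_le_mul_of_nonneg_left hU hη]

lemma exists_integral_Ufun_le_exp_neg_mul_add {c : ℝ} (hc : 0 < c) (R S : ℝ)
    {B : EuclideanSpace ℝ (Fin d) → ℝ} (hB : ∀ ρ, BddAbove (B '' Metric.closedBall 0 ρ)) :
    ∃ C > 0, ∀ᶠ η : ℝ in 𝓝[>] 0, ∀ (x m : EuclideanSpace ℝ (Fin d))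
      (A : Matrix (Fin d) (Fin d) ℝ), IsUnit A → matOpNorm A ^ 2 ≤ η * S →
        (R ≤ ‖x‖ → ‖m‖ ^ 2 ≤ ‖x‖ ^ 2 - c * η * ‖x‖ ^ 2) → ‖m - x‖ ≤ η * B x →
          ∫ z, Ufun z ∂gaussianMeasure m (A * A.transpose) ≤ rexp (-η) * Ufun x + C * η := by
  obtain ⟨R', hfar⟩ := exists_integral_Ufun_le_exp_neg_mul (d := d) hc S
  obtain ⟨ρ, hρ0, hρ⟩ : ∃ ρ, 0 ≤ ρ ∧ max R R' ≤ ρ := ⟨_, le_max_left 0 _, le_max_right 0 _⟩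
  obtain ⟨D, hD0, hD⟩ := (hB ρ).exists_ge 0
  obtain ⟨C, hnear⟩ := exists_integral_Ufun_le_add_mul (d := d) hρ0 hD0 S
  refine ⟨max C 0 + rexp (3 * ρ), by positivity, ?_⟩
  filter_upwards [self_mem_nhdsWithin, hfar, hnear]
    with η (hη : 0 < η) hfarη hnearη x m A hA hAS hstep hmx
  rcases le_total ρ ‖x‖ with hx | hx
  · refine (hfarη x m A hA hAS ((le_max_right _ _).trans (hρ.trans hx))
      (hstep ((le_max_left _ _).trans (hρ.trans hx)))).trans ?_
    exact le_add_of_nonneg_right (by positivity)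
  · have hBx : B x ≤ D := hD _ (mem_image_of_mem B (mem_closedBall_zero_iff.2 hx))
    calc ∫ z, Ufun z ∂gaussianMeasure m (A * A.transpose)
        ≤ Ufun x + C * η := hnearη x m A hA hAS hx (hmx.trans (by gcongr))
      _ ≤ rexp (-η) * Ufun x + rexp (3 * ρ) * η + max C 0 * η := by
          gcongr
          · exact Ufun_le_exp_neg_mul_add hη.le hx
          · exact le_max_left _ _
      _ = rexp (-η) * Ufun x + (max C 0 + rexp (3 * ρ)) * η := by ring

end Lyapunov

section MatrixScaling

variable {d : ℕ}

lemma matOpNorm_smul (c : ℝ) (A : Matrix (Fin d) (Fin d) ℝ) :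
    matOpNorm (c • A) = |c| * matOpNorm A := by
  rw [matOpNorm, map_smul, map_smul, norm_smul, Real.norm_eq_abs, matOpNorm]

lemma isUnit_sqrt_smul {η : ℝ} (hη : 0 < η) {A : Matrix (Fin d) (Fin d) ℝ} (hA : IsUnit A) :
    IsUnit (√η • A) :=
  hA.smul (Units.mk0 √η (Real.sqrt_pos.2 hη).ne')

lemma matOpNorm_sqrt_smul_sq {η : ℝ} (hη : 0 ≤ η) (A : Matrix (Fin d) (Fin d) ℝ) :
    matOpNorm (√η • A) ^ 2 = η * matOpNorm A ^ 2 := by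
  rw [matOpNorm_smul, mul_pow, sq_abs, Real.sq_sqrt hη]

lemma sqrt_smul_mul_transpose {η : ℝ} (hη : 0 ≤ η) (A : Matrix (Fin d) (Fin d) ℝ) :
    √η • A * (√η • A).transpose = η • (A * A.transpose) := by
  rw [Matrix.transpose_smul, Matrix.smul_mul, Matrix.mul_smul, smul_smul, Real.mul_self_sqrt hη]

end MatrixScaling

section Derivative

variable {E F : Type*} [NormedAddCommGroup E] [NormedSpace ℝ E] [NormedAddCommGroup F]
  [NormedSpace ℝ F]

lemma norm_le_of_hasFDerivAt_of_eventually_norm_sub_le {f : E → F} {f' : E →L[ℝ] F} {x : E}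
    {C : E → ℝ} (hf : HasFDerivAt f f' x) (hC : ContinuousAt C x) (hCx : 0 ≤ C x)
    (hlip : ∀ᶠ y in 𝓝 x, ‖f y - f x‖ ≤ C y * ‖y - x‖) : ‖f'‖ ≤ C x := by
  refine le_of_forall_pos_le_add fun ε hε => hf.le_of_lip' (by positivity) ?_
  filter_upwards [hlip, hC.eventually_le_const (lt_add_of_pos_right _ hε)] with y hy hCy
  exact hy.trans (by gcongr)

lemma norm_le_of_hasFDerivAt_of_polynomial_lipschitz {r L : ℝ} (hr : 0 ≤ r) (hL : 0 ≤ L)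
    {f : E → F} {f' : E →L[ℝ] F} {x : E} (hf : HasFDerivAt f f' x)
    (hlip : ∀ x y, ‖f x - f y‖ ≤ L * (1 + ‖x‖ ^ r + ‖y‖ ^ r) * ‖x - y‖) :
    ‖f'‖ ≤ 2 * L * (1 + ‖x‖ ^ r) := by
  have hcont : Continuous fun y : E => L * (1 + ‖y‖ ^ r + ‖x‖ ^ r) := by
    have := Real.continuous_rpow_const hr
    fun_prop
  have hbound := norm_le_of_hasFDerivAt_of_eventually_norm_sub_le hf hcont.continuousAt
    (by positivity) (.of_forall fun y => hlip y x)
  linarith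

end Derivative

section Drift

/-- The effective step size `η / (1 + η ^ α * M)` of the tamed Euler scheme, in which `M` is the
norm of the derivative of the drift at the current point. -/
noncomputable def tamedStepSize (α η M : ℝ) : ℝ :=
  η / (1 + η ^ α * M)

variable {α η M : ℝ}

lemma tamedStepSize_nonneg (hη : 0 ≤ η) (hM : 0 ≤ M) : 0 ≤ tamedStepSize α η M := by
  unfold tamedStepSize
  positivity

lemma tamedStepSize_le (hη : 0 ≤ η) (hM : 0 ≤ M) : tamedStepSize α η M ≤ η :=
  div_le_self hη (le_add_of_nonneg_right (by positivity))

lemma tamedStepSize_mul_le (hη : 0 < η) (hM : 0 ≤ M) :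
    tamedStepSize α η M * M ≤ η ^ (1 - α) := by
  have hpow : η ^ (1 - α) * η ^ α = η := by
    rw [← Real.rpow_add hη, sub_add_cancel, Real.rpow_one]
  have : 0 < η ^ (1 - α) := Real.rpow_pos_of_pos hη _
  rw [tamedStepSize, div_mul_eq_mul_div, div_le_iff₀ (by positivity)]
  calc η * M = η ^ (1 - α) * (η ^ α * M) := by rw [← mul_assoc, hpow]
    _ ≤ η ^ (1 - α) * (1 + η ^ α * M) := by gcongr; linarith

lemma div_le_tamedStepSize_mul {K X : ℝ} (hα : 0 ≤ α) (hη : 0 < η) (hη1 : η ≤ 1) (hK : 0 ≤ K)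
    (hX : 1 ≤ X) (hM : 0 ≤ M) (hMX : M ≤ K * X) : η / (1 + K) ≤ tamedStepSize α η M * X := by
  have hηα : η ^ α ≤ 1 := Real.rpow_le_one hη.le hη1 hα
  rw [tamedStepSize, div_mul_eq_mul_div, div_le_div_iff₀ (by positivity) (by positivity), mul_assoc]
  gcongr
  calc 1 + η ^ α * M ≤ X + 1 * (K * X) := by gcongr
    _ = X * (1 + K) := by ring

variable {E : Type*} [NormedAddCommGroup E] [InnerProductSpace ℝ E]

lemma norm_add_tamedStepSize_smul_sub_le (hη : 0 ≤ η) (hM : 0 ≤ M) (x v : E) :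
    ‖x + tamedStepSize α η M • v - x‖ ≤ η * ‖v‖ := by
  rw [add_sub_cancel_left, norm_smul, Real.norm_of_nonneg (tamedStepSize_nonneg hη hM)]
  gcongr
  exact tamedStepSize_le hη hM

lemma norm_add_smul_sq_le {h a : ℝ} {x v : E} (hh : 0 ≤ h) (hxv : ⟪x, v⟫ ≤ -a)
    (hv : h * ‖v‖ ^ 2 ≤ a) : ‖x + h • v‖ ^ 2 ≤ ‖x‖ ^ 2 - h * a := by
  rw [norm_add_sq_real, real_inner_smul_right, norm_smul, Real.norm_of_nonneg hh, mul_pow]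
  nlinarith [mul_le_mul_of_nonneg_left hxv hh, mul_le_mul_of_nonneg_left hv hh]

lemma le_mul_of_dissipative_of_norm_le {L lam : ℝ} {x v : E} (hL : 0 ≤ L) (hx : 1 ≤ ‖x‖)
    (hxL : 4 * L ≤ lam * ‖x‖) (hxv : ⟪x, v⟫ ≤ L - lam * ‖x‖ ^ 2)
    (hv : ‖v‖ ≤ L * (1 + ‖x‖ * M)) : lam ≤ 2 * L * M := by
  have hcs : lam * ‖x‖ ^ 2 - L ≤ ‖x‖ * (L * (1 + ‖x‖ * M)) := by
    calc lam * ‖x‖ ^ 2 - L ≤ -⟪x, v⟫ := by linarith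
      _ ≤ ‖x‖ * ‖v‖ := (neg_le_abs _).trans (abs_real_inner_le_norm x v)
      _ ≤ ‖x‖ * (L * (1 + ‖x‖ * M)) := by gcongr
  have hlow : 2 * (L + L * ‖x‖) ≤ lam * ‖x‖ ^ 2 := by
    linarith [mul_le_mul_of_nonneg_right hxL (norm_nonneg x), mul_le_mul_of_nonneg_left hx hL]
  refine le_of_mul_le_mul_right (a := ‖x‖ ^ 2) ?_ (by positivity)
  linarith

lemma norm_le_mul_of_dissipative_of_norm_le {L lam : ℝ} {x v : E} (hL : 0 ≤ L) (hlam : 0 < lam)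
    (hM : 0 ≤ M) (hx : 1 ≤ ‖x‖) (hxL : 4 * L ≤ lam * ‖x‖)
    (hxv : ⟪x, v⟫ ≤ L - lam * ‖x‖ ^ 2) (hv : ‖v‖ ≤ L * (1 + ‖x‖ * M)) :
    ‖v‖ ≤ L * (1 + 2 * L / lam) * (‖x‖ * M) := by
  have hone : 1 ≤ 2 * L / lam * (‖x‖ * M) := by
    calc 1 ≤ 2 * L / lam * M := by
          rw [div_mul_eq_mul_div, one_le_div hlam]
          exact le_mul_of_dissipative_of_norm_le hL hx hxL hxv hv
      _ ≤ 2 * L / lam * (‖x‖ * M) := by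
          gcongr
          exact le_mul_of_one_le_left hM hx
  calc ‖v‖ ≤ L * (1 + ‖x‖ * M) := hv
    _ ≤ L * (2 * L / lam * (‖x‖ * M) + ‖x‖ * M) := by gcongr
    _ = L * (1 + 2 * L / lam) * (‖x‖ * M) := by ring

lemma norm_add_tamedStepSize_smul_sq_le {L lam K X : ℝ} {x v : E} (hL : 0 ≤ L) (hlam : 0 < lam)
    (hα : 0 ≤ α) (hη : 0 < η) (hη1 : η ≤ 1) (hK : 0 ≤ K) (hX : 1 ≤ X) (hM : 0 ≤ M)
    (hMX : M ≤ K * X) (hηK : η ^ (1 - α) * (K * (L * (1 + 2 * L / lam)) ^ 2) ≤ lam / 2)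
    (hx : 1 ≤ ‖x‖) (hxL : 4 * L ≤ lam * ‖x‖) (hxv : ⟪x, v⟫ ≤ L - lam * (X * ‖x‖ ^ 2))
    (hv : ‖v‖ ≤ L * (1 + ‖x‖ * M)) :
    ‖x + tamedStepSize α η M • v‖ ^ 2 ≤ ‖x‖ ^ 2 - lam / (2 * (1 + K)) * η * ‖x‖ ^ 2 := by
  set G := L * (1 + 2 * L / lam)
  have hXx : ‖x‖ ^ 2 ≤ X * ‖x‖ ^ 2 := le_mul_of_one_le_left (sq_nonneg _) hX
  have hLx : 4 * L ≤ lam * (X * ‖x‖ ^ 2) := by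
    calc 4 * L ≤ lam * ‖x‖ := hxL
      _ ≤ lam * (X * ‖x‖ ^ 2) := by
          gcongr
          exact (le_self_pow₀ hx two_ne_zero).trans hXx
  have hvG : ‖v‖ ≤ G * (‖x‖ * M) := norm_le_mul_of_dissipative_of_norm_le hL hlam hM hx hxL
    (hxv.trans (by gcongr)) hv
  have hh0 : 0 ≤ tamedStepSize α η M := tamedStepSize_nonneg hη.le hM
  have hquad : tamedStepSize α η M * ‖v‖ ^ 2 ≤ lam / 2 * (X * ‖x‖ ^ 2) := by
    calc tamedStepSize α η M * ‖v‖ ^ 2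
        ≤ tamedStepSize α η M * (G * (‖x‖ * M)) ^ 2 := by gcongr
      _ = tamedStepSize α η M * M * (M * G ^ 2 * ‖x‖ ^ 2) := by ring
      _ ≤ η ^ (1 - α) * (K * X * G ^ 2 * ‖x‖ ^ 2) := by
          gcongr
          exact tamedStepSize_mul_le hη hM
      _ = η ^ (1 - α) * (K * G ^ 2) * (X * ‖x‖ ^ 2) := by ring
      _ ≤ lam / 2 * (X * ‖x‖ ^ 2) := by gcongr
  calc ‖x + tamedStepSize α η M • v‖ ^ 2
      ≤ ‖x‖ ^ 2 - tamedStepSize α η M * (lam / 2 * (X * ‖x‖ ^ 2)) :=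
        norm_add_smul_sq_le hh0 (by linarith) hquad
    _ = ‖x‖ ^ 2 - tamedStepSize α η M * X * (lam / 2 * ‖x‖ ^ 2) := by ring
    _ ≤ ‖x‖ ^ 2 - η / (1 + K) * (lam / 2 * ‖x‖ ^ 2) := by
        gcongr
        exact div_le_tamedStepSize_mul hα hη hη1 hK hX hM hMX
    _ = ‖x‖ ^ 2 - lam / (2 * (1 + K)) * η * ‖x‖ ^ 2 := by field_simp

lemma exists_norm_add_tamedStepSize_smul_sq_le {r L lam K : ℝ} (hr : 0 ≤ r) (hL : 0 ≤ L)
    (hlam : 0 < lam) (hα0 : 0 ≤ α) (hα1 : α < 1) (hK : 0 ≤ K) {b : E → E} {M : E → ℝ}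
    (hM : ∀ x, 0 ≤ M x) (hMK : ∀ x, M x ≤ K * (1 + ‖x‖ ^ r))
    (hdissip : ∀ x, ⟪x, b x⟫ ≤ L - lam * ‖x‖ ^ (r + 2))
    (hgrowth : ∀ x, ‖b x‖ ≤ L * (1 + ‖x‖ * M x)) :
    ∃ c > 0, ∃ R, ∀ᶠ η : ℝ in 𝓝[>] 0, ∀ x, R ≤ ‖x‖ →
      ‖x + tamedStepSize α η (M x) • b x‖ ^ 2 ≤ ‖x‖ ^ 2 - c * η * ‖x‖ ^ 2 := by
  refine ⟨lam / (2 * (1 + 2 * K)), by positivity, max 1 (4 * L / lam), ?_⟩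
  filter_upwards [Ioc_mem_nhdsGT one_pos, eventually_rpow_mul_le (sub_pos.2 hα1) (half_pos hlam)
    (2 * K * (L * (1 + 2 * L / lam)) ^ 2)] with η ⟨hη, hη1⟩ hηK x hRx
  have hx1 : 1 ≤ ‖x‖ := (le_max_left _ _).trans hRx
  have hxL : 4 * L ≤ lam * ‖x‖ := (div_le_iff₀' hlam).1 ((le_max_right _ _).trans hRx)
  have hX : 1 ≤ ‖x‖ ^ r := Real.one_le_rpow hx1 hr
  have hMX : M x ≤ 2 * K * ‖x‖ ^ r := (hMK x).trans (by nlinarith)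
  have hxv : ⟪x, b x⟫ ≤ L - lam * (‖x‖ ^ r * ‖x‖ ^ 2) := by
    rw [← Real.rpow_add_natCast (by positivity)]
    exact hdissip x
  exact norm_add_tamedStepSize_smul_sq_le hL hlam hα0 hη hη1 (by positivity) hX (hM x) hMX hηK hx1
    hxL hxv (hgrowth x)

end Drift

theorem stmt15_general {d : ℕ} (r L₁ lam L₂ α : ℝ) (hr : 0 ≤ r) (hL₁ : 0 ≤ L₁) (hlam : 0 < lam)
    (hα0 : 0 ≤ α) (hα1 : α < 1) (b : EuclideanSpace ℝ (Fin d) → EuclideanSpace ℝ (Fin d))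
    (b' : EuclideanSpace ℝ (Fin d) → EuclideanSpace ℝ (Fin d) →L[ℝ] EuclideanSpace ℝ (Fin d))
    (σ : EuclideanSpace ℝ (Fin d) → Matrix (Fin d) (Fin d) ℝ)
    (hb : ∀ x, HasFDerivAt b (b' x) x)
    (hdissip : ∀ x, ⟪x, b x⟫ ≤ L₁ - lam * ‖x‖ ^ (r + 2))
    (hgrowth : ∀ x, ‖b x‖ ≤ L₁ * (1 + ‖x‖ * ‖b' x‖))
    (hlip : ∀ x y, ‖b x - b y‖ ≤ L₁ * (1 + ‖x‖ ^ r + ‖y‖ ^ r) * ‖x - y‖)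
    (hσinv : ∀ x, IsUnit (σ x)) (hσbd : ∀ x, matOpNorm (σ x) ≤ L₂) :
    ∃ C > 0, ∃ lam' > 0, ∃ ηbar > 0,
      ∀ (x : EuclideanSpace ℝ (Fin d)) (η : ℝ), 0 < η → η ≤ ηbar →
        ∫ z, Ufun z ∂gaussianMeasure (x + (η / (1 + η ^ α * ‖b' x‖)) • b x)
            (η • (σ x * (σ x).transpose)) ≤ rexp (-lam' * η) * Ufun x + C * η := by
  have hb' : ∀ x, ‖b' x‖ ≤ 2 * L₁ * (1 + ‖x‖ ^ r) := fun x =>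
    norm_le_of_hasFDerivAt_of_polynomial_lipschitz hr hL₁ (hb x) hlip
  have hcont : Continuous b := continuous_iff_continuousAt.2 fun x => (hb x).continuousAt
  have hbdd : ∀ ρ, BddAbove ((fun x => ‖b x‖) '' Metric.closedBall 0 ρ) := fun ρ =>
    (isCompact_closedBall 0 ρ).bddAbove_image hcont.norm.continuousOn
  obtain ⟨c, hc, R, hstep⟩ := exists_norm_add_tamedStepSize_smul_sq_le hr hL₁ hlam hα0 hα1
    (by positivity) (fun x => norm_nonneg (b' x)) hb' hdissip hgrowth
  obtain ⟨C, hC, hmain⟩ := exists_integral_Ufun_le_exp_neg_mul_add hc R (L₂ ^ 2) hbdd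
  obtain ⟨ηbar, hηbar, hsub⟩ := mem_nhdsGT_iff_exists_Ioc_subset.1 (hstep.and hmain)
  refine ⟨C, hC, 1, one_pos, ηbar, hηbar, fun x η hη hηle => ?_⟩
  obtain ⟨hstepη, hmainη⟩ := hsub ⟨hη, hηle⟩
  rw [← sqrt_smul_mul_transpose hη.le, neg_one_mul]
  refine hmainη x _ _ (isUnit_sqrt_smul hη (hσinv x)) ?_ (hstepη x) ?_
  · rw [matOpNorm_sqrt_smul_sq hη.le]
    gcongr
    · exact norm_nonneg _
    · exact hσbd x
  · exact norm_add_tamedStepSize_smul_sub_le hη.le (norm_nonneg (b' x)) x (b x)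

theorem stmt15 {d : ℕ} (r L₁ lam L₂ α : ℝ) (hr : 0 ≤ r) (hL₁ : 0 < L₁) (hlam : 0 < lam)
    (hL₂ : 0 < L₂) (hα0 : 0 < α) (hα : α < 1 / 2)
    (b : EuclideanSpace ℝ (Fin d) → EuclideanSpace ℝ (Fin d))
    (σ : EuclideanSpace ℝ (Fin d) → Matrix (Fin d) (Fin d) ℝ)
    -- drift assumption
    (hb : ContDiff ℝ 1 b)
    (hdissip : ∀ x, ⟪x, b x⟫ ≤ L₁ - lam * ‖x‖ ^ (r + 2))
    (hgrowth : ∀ x, ‖b x‖ ≤ L₁ * (1 + ‖x‖ * ‖fderiv ℝ b x‖))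
    (hlip : ∀ x y, ‖b x - b y‖ ≤ L₁ * (1 + ‖x‖ ^ r + ‖y‖ ^ r) * ‖x - y‖)
    -- diffusion assumption (σ viewed as a map into linear operators on ℝ^d)
    (hσ : ContDiff ℝ 2
      (fun y => LinearMap.toContinuousLinearMap (Matrix.toEuclideanLin (σ y))))
    (hσinv : ∀ x, IsUnit (σ x))
    (hσbd : ∀ x, matOpNorm (σ x) ≤ L₂)
    (hσinvbd : ∀ x, matOpNorm (σ x)⁻¹ ≤ L₂)
    (hσder : ∀ x, ‖fderiv ℝ
      (fun y => LinearMap.toContinuousLinearMap (Matrix.toEuclideanLin (σ y))) x‖ ≤ L₂)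
    (hσder2 : ∀ x, ‖iteratedFDeriv ℝ 2
      (fun y => LinearMap.toContinuousLinearMap (Matrix.toEuclideanLin (σ y))) x‖ ≤ L₂) :
    ∃ C > 0, ∃ lam' > 0, ∃ ηbar > 0,
      ∀ (x : EuclideanSpace ℝ (Fin d)) (η : ℝ), 0 < η → η ≤ ηbar →
        ∫ z, Ufun z
            ∂(gaussianMeasure (x + (η / (1 + η ^ α * ‖fderiv ℝ b x‖)) • b x)
              (η • (σ x * (σ x).transpose)))
          ≤ Real.exp (-lam' * η) * Ufun x + C * η := by
  exact stmt15_general r L₁ lam L₂ α hr hL₁.le hlam hα0.le (hα.trans one_half_lt_one) b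
    (fderiv ℝ b) σ (fun x => (hb.differentiable one_ne_zero x).hasFDerivAt) hdissip hgrowth hlip
    hσinv hσbd
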